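/- arXiv:2006.13333 — 2 statements merged into one kernel-verified Lean document; each statement's English description precedes it below -/
import Mathlib

section
/- Let A ∈ ℝ^{n×n} be symmetric and strictly k-positive, where 1 ≤ k ≤ n, and let λ₁, …, λ_n be its (real) eigenvalues, counted with multiplicity and ordered so that |λ₁| ≥ |λ₂| ≥ … ≥ |λ_n|. Then the k largest-in-modulus eigenvalues are positive and simple: λ₁ > λ₂ > … > λ_k > 0, and λ_k > |λ_i| for every i > k. -/
open Matrix Polynomial

/-- A matrix is strictly `k`-positive if all its minors of order at most `k`
(taken with strictly increasing row and column indices) are positive. -/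
def IsStrictlyKPositive {m n : ℕ} (X : Matrix (Fin m) (Fin n) ℝ) (k : ℕ) : Prop :=
  ∀ p : ℕ, 1 ≤ p → p ≤ k → ∀ r : Fin p → Fin m, ∀ c : Fin p → Fin n,
    StrictMono r → StrictMono c → 0 < (X.submatrix r c).det

/-!
The `p`-th compound matrix of `A`, whose entries are the minors of order `p`, is symmetric and, for
`p ≤ k`, entrywise positive; by Cauchy–Binet its eigenvalues are the products of `p` eigenvalues of
`A`. Perron's theorem then says that `λ₁ ⋯ λ_p` is positive and strictly larger in modulus than
every other product of `p` eigenvalues. Dividing `λ₁ ⋯ λ_p` by `λ₁ ⋯ λ_{p-1}` gives `0 < λ_p`, and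
comparing with `λ₁ ⋯ λ_{p-1} λ_j` gives `|λ_j| < λ_p` for `p < j`.
-/

theorem nonneg_of_sum_abs_le_abs_sum {α G : Type*} [AddCommGroup G] [LinearOrder G]
    [IsOrderedAddMonoid G] {s : Finset α} {a : α → G} (h : ∑ i ∈ s, |a i| ≤ |∑ i ∈ s, a i|)
    {p : α} (hp : p ∈ s) (hpos : 0 < a p) {q : α} (hq : q ∈ s) : 0 ≤ a q := by
  rcases abs_choice (∑ i ∈ s, a i) with habs | habs <;> rw [habs] at h
  · have hle : ∀ i ∈ s, a i ≤ |a i| := fun i _ => le_abs_self _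
    have heq := (Finset.sum_eq_sum_iff_of_le hle).mp ((Finset.sum_le_sum hle).antisymm h)
    exact abs_eq_self.mp (heq q hq).symm
  · rw [← Finset.sum_neg_distrib] at h
    have hle : ∀ i ∈ s, -a i ≤ |a i| := fun i _ => neg_le_abs _
    have heq := (Finset.sum_eq_sum_iff_of_le hle).mp ((Finset.sum_le_sum hle).antisymm h)
    exact absurd (abs_eq_neg_self.mp (heq p hp).symm) hpos.not_ge

theorem prod_le_prod_of_card_eq {α R : Type*} [CommSemiring R] [PartialOrder R]
    [IsOrderedRing R] {f : α → R} (hf : ∀ a, 0 ≤ f a) {s t : Finset α}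
    (hcard : t.card = s.card) (hs : ∀ a ∈ s, ∀ b ∉ s, f b ≤ f a) :
    ∏ a ∈ t, f a ≤ ∏ a ∈ s, f a := by
  classical
  have e : ↥(t \ s) ≃ ↥(s \ t) := Finset.equivOfCardEq (Finset.card_sdiff_comm hcard)
  have hsdiff : ∏ a ∈ t \ s, f a ≤ ∏ a ∈ s \ t, f a := by
    rw [← Finset.prod_coe_sort, ← Finset.prod_coe_sort (s \ t), ← e.prod_comp]
    exact Finset.prod_le_prod (fun a _ => hf a) fun a _ =>
      hs _ (Finset.mem_sdiff.mp (e a).2).1 _ (Finset.mem_sdiff.mp a.2).2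
  rw [← Finset.prod_inter_mul_prod_sdiff t s, ← Finset.prod_inter_mul_prod_sdiff s t,
    Finset.inter_comm]
  exact mul_le_mul_of_nonneg_left hsdiff (Finset.prod_nonneg fun a _ => hf a)

theorem exists_perm_of_prod_X_sub_C_eq {ι R : Type*} [Fintype ι] [CommRing R] [IsDomain R]
    {f g : ι → R} (h : ∏ i, (X - C (f i)) = ∏ i, (X - C (g i))) :
    ∃ σ : Equiv.Perm ι, g ∘ σ = f := by
  classical
  have hroots (u : ι → R) : (∏ i, (X - C (u i))).roots = Finset.univ.val.map u := by
    rw [← roots_multiset_prod_X_sub_C (Finset.univ.val.map u), Multiset.map_map]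
    rfl
  have hcard (c : R) : Fintype.card {i // f i = c} = Fintype.card {i // g i = c} := by
    have hcount : (Finset.univ.val.map f).count c = (Finset.univ.val.map g).count c := by
      rw [← hroots f, h, hroots g]
    rw [Multiset.count_map, Multiset.count_map] at hcount
    simpa only [Fintype.card_subtype, Finset.card_def, Finset.filter_val, eq_comm] using hcount
  exact ⟨Equiv.ofFiberEquiv fun c => Fintype.equivOfCardEq (hcard c),
    funext fun i => Equiv.ofFiberEquiv_map _ i⟩

section SignPattern

variable {ι R : Type*} [Fintype ι] [CommRing R] [LinearOrder R] [IsStrictOrderedRing R]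
  {M : Matrix ι ι R}

-- The Rayleigh bound at `|w|` forces equality in the triangle inequality for `w ⬝ᵥ M *ᵥ w`, so all
-- its terms `w i * M i j * w j` have the sign of the diagonal ones.
theorem eigenvector_mul_nonneg (hpos : ∀ i j, 0 < M i j) {μ : R}
    (hbound : ∀ x, x ⬝ᵥ M *ᵥ x ≤ |μ| * (x ⬝ᵥ x)) {w : ι → R} (hw : M *ᵥ w = μ • w) (i j : ι) :
    0 ≤ w i * w j := by
  have hquad (x : ι → R) : x ⬝ᵥ M *ᵥ x = ∑ p : ι × ι, M p.1 p.2 * (x p.1 * x p.2) := by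
    simp only [dotProduct, mulVec, Finset.mul_sum, Fintype.sum_prod_type]
    exact Finset.sum_congr rfl fun i _ => Finset.sum_congr rfl fun j _ => by ring
  have hsum : ∑ p : ι × ι, |M p.1 p.2 * (w p.1 * w p.2)| ≤
      |∑ p : ι × ι, M p.1 p.2 * (w p.1 * w p.2)| :=
    calc ∑ p : ι × ι, |M p.1 p.2 * (w p.1 * w p.2)| = |w| ⬝ᵥ M *ᵥ |w| := by
          simp only [hquad, Pi.abs_apply, abs_mul, abs_of_pos (hpos _ _)]
      _ ≤ |μ| * (|w| ⬝ᵥ |w|) := hbound _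
      _ = |μ| * (w ⬝ᵥ w) := by simp only [dotProduct, Pi.abs_apply, abs_mul_abs_self]
      _ = |w ⬝ᵥ M *ᵥ w| := by
          have hww : 0 ≤ w ⬝ᵥ w := Finset.sum_nonneg fun i _ => mul_self_nonneg (w i)
          rw [hw, dotProduct_smul, smul_eq_mul, abs_mul, abs_of_nonneg hww]
      _ = _ := by rw [hquad]
  rcases eq_or_ne (w i) 0 with hi | hi
  · rw [hi, zero_mul]
  · have hii : 0 < M i i * (w i * w i) := mul_pos (hpos i i) (mul_self_pos.mpr hi)
    have hij : 0 ≤ M i j * (w i * w j) :=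
      nonneg_of_sum_abs_le_abs_sum hsum (Finset.mem_univ (i, i)) hii (Finset.mem_univ (i, j))
    exact nonneg_of_mul_nonneg_right hij (hpos i j)

theorem eigenvalue_pos_and_eigenvector_mul_pos (hpos : ∀ i j, 0 < M i j) {μ : R}
    (hbound : ∀ x, x ⬝ᵥ M *ᵥ x ≤ |μ| * (x ⬝ᵥ x)) {w : ι → R} (hw : M *ᵥ w = μ • w)
    (hw0 : w ≠ 0) : 0 < μ ∧ ∀ i j, 0 < w i * w j := by
  have hsign := eigenvector_mul_nonneg hpos hbound hw
  have hμ (i j : ι) (hj : w j ≠ 0) : 0 < μ * (w i * w j) :=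
    calc 0 < ∑ l, M i l * (w l * w j) :=
          Finset.sum_pos' (fun l _ => mul_nonneg (hpos i l).le (hsign l j))
            ⟨j, Finset.mem_univ j, mul_pos (hpos i j) (mul_self_pos.mpr hj)⟩
      _ = (M *ᵥ w) i * w j := by simp only [mulVec, dotProduct, Finset.sum_mul, mul_assoc]
      _ = μ * (w i * w j) := by rw [hw, Pi.smul_apply, smul_eq_mul, mul_assoc]
  obtain ⟨k, hk⟩ := Function.ne_iff.mp hw0
  have hμ0 : 0 < μ := pos_of_mul_pos_left (hμ k k hk) (mul_self_nonneg _)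
  have hw_ne (i : ι) : w i ≠ 0 := fun hi => by simpa [hi] using hμ i k hk
  exact ⟨hμ0, fun i j => pos_of_mul_pos_right (hμ i j (hw_ne j)) hμ0.le⟩

theorem dotProduct_ne_zero_of_mul_pos [Nonempty ι] {v w : ι → R} (hv : ∀ i j, 0 < v i * v j)
    (hw : ∀ i j, 0 < w i * w j) : v ⬝ᵥ w ≠ 0 := by
  obtain ⟨k⟩ := ‹Nonempty ι›
  have hpos : 0 < v k * w k * (v ⬝ᵥ w) := by
    rw [dotProduct, Finset.mul_sum]
    refine Finset.sum_pos (fun i _ => ?_) ⟨k, Finset.mem_univ k⟩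
    rw [mul_mul_mul_comm]
    exact mul_pos (hv k i) (hw k i)
  exact right_ne_zero_of_mul hpos.ne'

end SignPattern

section Perron

variable {ι : Type*} [Fintype ι] {M : Matrix ι ι ℝ}

theorem exists_orthogonal_diagonalization [DecidableEq ι] (hM : M.IsSymm) {μ : ι → ℝ}
    (hspec : M.charpoly = ∏ t, (X - C (μ t))) :
    ∃ U ∈ orthogonalGroup ι ℝ, M = U * diagonal μ * Uᵀ := by
  have hH : M.IsHermitian := by rwa [IsHermitian, conjTranspose_eq_transpose_of_trivial]
  obtain ⟨σ, hσ⟩ : ∃ σ : Equiv.Perm ι, hH.eigenvalues ∘ σ = μ :=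
    exists_perm_of_prod_X_sub_C_eq (hspec.symm.trans hH.charpoly_eq)
  set V : Matrix ι ι ℝ := (hH.eigenvectorUnitary : Matrix ι ι ℝ)
  have hV : V * Vᵀ = 1 := by
    simpa only [Unitary.coe_star, star_eq_conjTranspose, conjTranspose_eq_transpose_of_trivial]
      using Unitary.coe_mul_star_self hH.eigenvectorUnitary
  have hVM : M = V * diagonal hH.eigenvalues * Vᵀ := by
    have := hH.spectral_theorem
    rwa [Unitary.conjStarAlgAut_apply, star_eq_conjTranspose,
      conjTranspose_eq_transpose_of_trivial] at this
  refine ⟨V.submatrix id σ, (mem_orthogonalGroup_iff ι ℝ).mpr ?_, ?_⟩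
  · rw [transpose_submatrix, submatrix_mul_equiv, hV, submatrix_id_id]
  · rw [← hσ, ← submatrix_diagonal_equiv, submatrix_mul_equiv, transpose_submatrix,
      submatrix_mul_equiv, ← hVM, submatrix_id_id]

theorem dotProduct_mulVec_le_of_eigenvalues_le [DecidableEq ι] (hM : M.IsSymm) {μ : ι → ℝ}
    (hspec : M.charpoly = ∏ t, (X - C (μ t))) {c : ℝ} (hc : ∀ t, μ t ≤ c) (x : ι → ℝ) :
    x ⬝ᵥ M *ᵥ x ≤ c * (x ⬝ᵥ x) := by
  obtain ⟨U, hU, rfl⟩ := exists_orthogonal_diagonalization hM hspec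
  have hquad (d : ι → ℝ) :
      x ⬝ᵥ (U * diagonal d * Uᵀ) *ᵥ x = ∑ t, d t * (Uᵀ *ᵥ x) t ^ 2 := by
    rw [← mulVec_mulVec, ← mulVec_mulVec, dotProduct_mulVec, ← mulVec_transpose]
    exact Finset.sum_congr rfl fun t _ => by rw [mulVec_diagonal]; ring
  have hconst : U * diagonal (fun _ => c) * Uᵀ = c • (1 : Matrix ι ι ℝ) := by
    rw [← smul_one_eq_diagonal, Matrix.mul_smul, Matrix.smul_mul, Matrix.mul_one,
      (mem_orthogonalGroup_iff ι ℝ).mp hU]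
  calc x ⬝ᵥ (U * diagonal μ * Uᵀ) *ᵥ x = ∑ t, μ t * (Uᵀ *ᵥ x) t ^ 2 := hquad μ
    _ ≤ ∑ t, c * (Uᵀ *ᵥ x) t ^ 2 := by gcongr with t; exact hc t
    _ = c * (x ⬝ᵥ x) := by
      rw [← hquad, hconst, smul_mulVec, one_mulVec, dotProduct_smul, smul_eq_mul]

theorem perron_of_isSymm [DecidableEq ι] (hM : M.IsSymm) (hpos : ∀ i j, 0 < M i j) {μ : ι → ℝ}
    (hspec : M.charpoly = ∏ t, (X - C (μ t))) {s : ι} (hmax : ∀ t, |μ t| ≤ |μ s|) :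
    0 < μ s ∧ ∀ t, t ≠ s → |μ t| < μ s := by
  obtain ⟨U, hU, hMU⟩ := exists_orthogonal_diagonalization hM hspec
  have hU' : Uᵀ * U = 1 := (mem_orthogonalGroup_iff' ι ℝ).mp hU
  have heig (t : ι) : M *ᵥ U.col t = μ t • U.col t := by
    have hMU' : M * U = U * diagonal μ := by rw [hMU, Matrix.mul_assoc, hU', Matrix.mul_one]
    ext i
    have := congrFun (congrFun hMU' i) t
    rwa [mul_diagonal, mul_comm] at this
  have horth (t u : ι) : U.col t ⬝ᵥ U.col u = (1 : Matrix ι ι ℝ) t u := by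
    rw [← hU']; rfl
  have hmaximal (t : ι) (ht : |μ t| = |μ s|) :
      0 < μ t ∧ ∀ i j, 0 < U.col t i * U.col t j := by
    refine eigenvalue_pos_and_eigenvector_mul_pos hpos ?_ (heig t) fun h0 => ?_
    · rw [ht]
      exact dotProduct_mulVec_le_of_eigenvalues_le hM hspec fun u => (le_abs_self _).trans (hmax u)
    · simpa [h0] using horth t t
  obtain ⟨hs, hs_sign⟩ := hmaximal s rfl
  refine ⟨hs, fun t hts => ?_⟩
  rw [← abs_of_pos hs]
  refine (hmax t).lt_of_ne fun heq => ?_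
  have : Nonempty ι := ⟨s⟩
  exact dotProduct_ne_zero_of_mul_pos (hmaximal t heq).2 hs_sign
    ((horth t s).trans (one_apply_ne hts))

end Perron

section Compound

open Set

theorem prod_ofFinEmbEquiv_symm {α R : Type*} [LinearOrder α] [CommMonoid R] {p : ℕ}
    (d : α → R) (s : powersetCard α p) :
    ∏ i, d (powersetCard.ofFinEmbEquiv.symm s i) = ∏ i ∈ s.1, d i :=
  ((powersetCard.orderIsoOfFin s).toEquiv.prod_comp fun i => d i).trans (Finset.prod_coe_sort _ _)

/-- The `p`-th compound matrix of `A`: the matrix of its minors of order `p`. Rows and columns are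
indexed by the `p`-element sets of indices, each enumerated in increasing order. -/
def compound {m n R : Type*} [LinearOrder m] [LinearOrder n] [CommRing R] (p : ℕ)
    (A : Matrix m n R) : Matrix (powersetCard m p) (powersetCard n p) R :=
  .of fun s t =>
    (A.submatrix (powersetCard.ofFinEmbEquiv.symm s) (powersetCard.ofFinEmbEquiv.symm t)).det

variable {l m n R : Type*} [LinearOrder l] [LinearOrder m] [LinearOrder n] [CommRing R] (p : ℕ)

theorem compound_apply (A : Matrix m n R) (s : powersetCard m p) (t : powersetCard n p) :
    compound p A s t = (A.submatrix (powersetCard.ofFinEmbEquiv.symm s)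
      (powersetCard.ofFinEmbEquiv.symm t)).det := rfl

theorem transpose_compound (A : Matrix m n R) : (compound p A)ᵀ = compound p Aᵀ := by
  ext s t
  rw [transpose_apply, compound_apply, compound_apply, ← det_transpose, transpose_submatrix]

theorem compound_diagonal (d : n → R) :
    compound p (diagonal d) = diagonal fun s => ∏ i ∈ s.1, d i := by
  ext s t
  rw [compound_apply]
  rcases eq_or_ne s t with rfl | hst
  · rw [diagonal_apply_eq, submatrix_diagonal d _ (powersetCard.ofFinEmbEquiv.symm s).injective,
      det_diagonal]
    exact prod_ofFinEmbEquiv_symm d s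
  · rw [diagonal_apply_ne _ hst]
    obtain ⟨i, his, hit⟩ := (powersetCard.exists_mem_notMem_iff_ne s t).mp hst
    obtain ⟨k, rfl⟩ := (powersetCard.mem_range_ofFinEmbEquiv_symm_iff_mem s i).mpr his
    refine det_eq_zero_of_row_eq_zero k fun j => diagonal_apply_ne _ fun hkj => hit ?_
    rw [hkj]
    exact (powersetCard.mem_range_ofFinEmbEquiv_symm_iff_mem t _).mp ⟨j, rfl⟩

theorem compound_one : compound p (1 : Matrix n n R) = 1 := by
  rw [← diagonal_one, compound_diagonal]
  simp only [Finset.prod_const_one, diagonal_one]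

theorem compound_eq_toMatrix [Finite m] [Fintype n] (A : Matrix m n R) :
    compound p A = LinearMap.toMatrix ((Pi.basisFun R n).exteriorPower p)
      ((Pi.basisFun R m).exteriorPower p) (exteriorPower.map p (toLin' A)) := by
  ext s t
  rw [LinearMap.toMatrix_apply, exteriorPower.basis_repr_apply, exteriorPower.basis_apply,
    exteriorPower.map_apply_ιMulti_family, exteriorPower.ιMulti_family,
    exteriorPower.ιMultiDual_apply_ιMulti, compound_apply, ← det_transpose]
  congr 1
  ext i j
  simp

/-- The **Cauchy–Binet formula**. -/
theorem compound_mul [Finite l] [Fintype m] [Finite n] (A : Matrix l m R) (B : Matrix m n R) :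
    compound p (A * B) = compound p A * compound p B := by
  have := Fintype.ofFinite n
  rw [compound_eq_toMatrix, compound_eq_toMatrix, compound_eq_toMatrix, toLin'_mul,
    exteriorPower.map_comp, LinearMap.toMatrix_comp _ ((Pi.basisFun R m).exteriorPower p)]

theorem charpoly_compound_mul_diagonal_mul [Fintype n] {P Q : Matrix n n R} (hQP : Q * P = 1)
    (d : n → R) :
    (compound p (P * diagonal d * Q)).charpoly =
      ∏ s : powersetCard n p, (X - C (∏ i ∈ s.1, d i)) := by
  rw [compound_mul, charpoly_mul_comm, compound_mul, ← Matrix.mul_assoc, ← compound_mul, hQP,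
    compound_one, Matrix.one_mul, compound_diagonal, charpoly_diagonal]

variable {p}

theorem prod_eigenvalues_pos_and_dominant [Fintype n] {A : Matrix n n ℝ} (hsymm : A.IsSymm)
    (hpos : ∀ s t, 0 < compound p A s t) {lam : n → ℝ}
    (hspec : A.charpoly = ∏ i, (X - C (lam i))) {s : powersetCard n p}
    (hs : ∀ i ∈ s.1, ∀ j ∉ s.1, |lam j| ≤ |lam i|) :
    0 < ∏ i ∈ s.1, lam i ∧ ∀ t ≠ s, |∏ i ∈ t.1, lam i| < ∏ i ∈ s.1, lam i := by
  obtain ⟨U, hU, hAU⟩ := exists_orthogonal_diagonalization hsymm hspec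
  have hcompound_symm : (compound p A).IsSymm := by
    rw [IsSymm, transpose_compound, hsymm.eq]
  have hcompound_spec : (compound p A).charpoly =
      ∏ t : powersetCard n p, (X - C (∏ i ∈ t.1, lam i)) := by
    rw [hAU, charpoly_compound_mul_diagonal_mul p ((mem_orthogonalGroup_iff' n ℝ).mp hU)]
  refine perron_of_isSymm hcompound_symm hpos hcompound_spec fun t => ?_
  rw [Finset.abs_prod, Finset.abs_prod]
  exact prod_le_prod_of_card_eq (fun i => abs_nonneg _) (t.2.trans s.2.symm) hs

theorem IsStrictlyKPositive.compound_pos {a b k : ℕ} {A : Matrix (Fin a) (Fin b) ℝ}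
    (hA : IsStrictlyKPositive A k) (hp : p ≤ k) (s : powersetCard (Fin a) p)
    (t : powersetCard (Fin b) p) : 0 < compound p A s t := by
  rw [compound_apply]
  rcases Nat.eq_zero_or_pos p with rfl | hp0
  · rw [det_fin_zero]
    exact one_pos
  · exact hA p hp0 hp _ _ (OrderEmbedding.strictMono _) (OrderEmbedding.strictMono _)

end Compound

theorem IsStrictlyKPositive.eigenvalue_pos_and_dominant {n k : ℕ} {A : Matrix (Fin n) (Fin n) ℝ}
    (hA : IsStrictlyKPositive A k) (hsymm : A.IsSymm) {lam : Fin n → ℝ}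
    (hspec : A.charpoly = ∏ i, (X - C (lam i))) (hord : Antitone fun i => |lam i|) {i : Fin n}
    (hi : (i : ℕ) < k) : 0 < lam i ∧ ∀ j, i < j → |lam j| < lam i := by
  have hIio : 0 < ∏ a ∈ Finset.Iio i, lam a :=
    (prod_eigenvalues_pos_and_dominant (s := ⟨Finset.Iio i, Fin.card_Iio i⟩) hsymm
      (hA.compound_pos hi.le) hspec fun a ha b hb =>
        hord (by rw [Finset.mem_Iio] at ha hb; lia)).1
  obtain ⟨hIic, hdominant⟩ :=
    prod_eigenvalues_pos_and_dominant (s := ⟨Finset.Iic i, Fin.card_Iic i⟩) hsymm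
      (hA.compound_pos hi) hspec fun a ha b hb =>
        hord (by rw [Finset.mem_Iic] at ha hb; lia)
  have hnotMem {j : Fin n} (hij : i ≤ j) : j ∉ Finset.Iio i := by rwa [Finset.mem_Iio, not_lt]
  simp only [← Finset.Iio_insert, Finset.prod_insert (hnotMem le_rfl)] at hIic hdominant
  refine ⟨pos_of_mul_pos_left hIic hIio.le, fun j hij => ?_⟩
  have hj : j ∉ Finset.Iio i := hnotMem hij.le
  have hcard : (insert j (Finset.Iio i)).card = i + 1 := by
    rw [Finset.card_insert_of_notMem hj, Fin.card_Iio]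
  have hlt := hdominant ⟨insert j (Finset.Iio i), hcard⟩ fun h =>
    hij.ne' ((Finset.insert_inj hj).mp (congrArg Subtype.val h))
  rw [Finset.prod_insert hj, abs_mul, abs_of_pos hIio] at hlt
  exact lt_of_mul_lt_mul_right hlt hIio.le

/-- For a symmetric strictly `k`-positive matrix with eigenvalues
`lam 0, …, lam (n-1)` (counted with multiplicity, i.e. the characteristic
polynomial splits as `∏ (X - lam i)`), ordered by decreasing modulus,
the `k` largest-in-modulus eigenvalues are positive and simple, and the
`k`-th one strictly dominates the modulus of all subsequent eigenvalues. -/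
theorem symm_strictly_kpositive_eigenvalues
    {n k : ℕ} (hk1 : 1 ≤ k) (hkn : k ≤ n)
    (A : Matrix (Fin n) (Fin n) ℝ) (hsymm : A.IsSymm)
    (hA : IsStrictlyKPositive A k)
    (lam : Fin n → ℝ)
    (hspec : A.charpoly = ∏ i, (X - C (lam i)))
    (hord : ∀ i j : Fin n, i ≤ j → |lam j| ≤ |lam i|) :
    (∀ i j : Fin n, i < j → (j : ℕ) < k → lam j < lam i) ∧
    (∀ i : Fin n, (i : ℕ) < k → 0 < lam i) ∧
    (∀ i : Fin n, k ≤ (i : ℕ) → ∀ j : Fin n, (j : ℕ) + 1 = k → |lam i| < lam j) := by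
  have hdominant {i : Fin n} (hi : (i : ℕ) < k) : 0 < lam i ∧ ∀ j, i < j → |lam j| < lam i :=
    hA.eigenvalue_pos_and_dominant hsymm hspec hord hi
  exact ⟨fun i j hij hj => (le_abs_self _).trans_lt ((hdominant (lt_trans hij hj)).2 j hij),
    fun i hi => (hdominant hi).1,
    fun i hi j hj => (hdominant (by lia)).2 i (by lia)⟩
end

section
/- Let A ∈ ℝ^{n×n} be symmetric and strictly k-positive, where 1 ≤ k ≤ n, with eigenvalues ordered so that |λ₁| ≥ … ≥ |λ_n|, and let u₁, …, u_k be eigenvectors of A corresponding to λ₁, …, λ_k. Then for all 1 ≤ p ≤ q ≤ k and all real coefficients c_p, …, c_q not all zero, the vector u = Σ_{i=p}^{q} c_i u_i satisfies p−1 ≤ S⁻(u) ≤ S⁺(u) ≤ q−1. -/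
open Matrix Polynomial

/-- Number of sign changes between consecutive entries of a list of reals. -/
noncomputable def signChanges : List ℝ → ℕ
  | [] => 0
  | [_] => 0
  | a :: b :: l => (if a * b < 0 then 1 else 0) + signChanges (b :: l)

/-- `S⁻(x)`: the number of sign changes in the sequence obtained from `x`
by deleting its zero entries. -/
noncomputable def Sminus {n : ℕ} (x : Fin n → ℝ) : ℕ :=
  signChanges ((List.ofFn x).filter (· ≠ 0))

/-- `S⁺(x)`: the maximal number of sign changes obtainable after replacing
each zero entry of `x` by an arbitrary nonzero value. -/
noncomputable def Splus {n : ℕ} (x : Fin n → ℝ) : ℕ :=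
  sSup {m : ℕ | ∃ y : Fin n → ℝ, (∀ i, y i ≠ 0) ∧ (∀ i, x i ≠ 0 → y i = x i) ∧
    signChanges (List.ofFn y) = m}

/-!
Let `V` be an orthonormal eigenbasis of `A`, ordered by decreasing modulus of the eigenvalues. For
`m ≤ k`, the `m`-th compound of `A` has positive entries, and by Cauchy–Binet the `m`-th compound of
`V` is an orthonormal eigenbasis of it, whose dominant eigenvector consists of the maximal minors of
the first `m` columns of `V`. By Perron's theorem these minors all have the same strict sign, and
the dominant eigenvalue is simple in modulus; comparing products of eigenvalues then gives
`|λ₁| > … > |λ_k| > |λ_{k+1}|`, so that `u_i` is a multiple of the `i`-th column of `V`.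

Consequently `u = ∑_{i=p}^q c_i u_i` is a combination of the first `q` columns and orthogonal to the
first `p - 1`. If `U` has `m` columns and all its maximal minors have one strict sign, then
* a nonzero `U g` cannot alternate weakly in sign along `m + 1` indices, because its entries there
  satisfy a linear relation whose coefficients, the minors of order `m`, strictly alternate in sign;
* a vector with at most `m - 1` sign changes is not orthogonal to all columns of `U`: cut into `m`
  blocks of constant sign, it sums the columns of `U` blockwise into an `m × m` matrix whose
  determinant is a nonnegative combination of maximal minors, and hence invertible.
The first fact gives `S⁺(u) ≤ q - 1`, the second `S⁻(u) ≥ p - 1`.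
-/

theorem mul_pos_trans {α : Type*} [CommRing α] [LinearOrder α] [IsStrictOrderedRing α]
    {a b c : α} (hab : 0 < a * b) (hbc : 0 < b * c) : 0 < a * c := by
  have hb : 0 < b * b := mul_self_pos.2 (left_ne_zero_of_mul hbc.ne')
  exact (pos_iff_pos_of_mul_pos (by linear_combination mul_pos hab hbc : 0 < b * b * (a * c))).1 hb

section SignBlocks

/-- A division of the entries of `x` into consecutive blocks `0, …, s`, where `b i` is the block
of the index `i`: every block contains a nonzero entry, and all nonzero entries of block `a` have
the sign of `(-1) ^ a * e`. It exists for `s = S⁻(x)`, and describes where `x` changes sign. -/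
structure IsSignBlockMap {ι : Type*} [Preorder ι] (x : ι → ℝ) (e : ℝ) (s : ℕ) (b : ι → ℕ) :
    Prop where
  monotone : Monotone b
  le : ∀ i, b i ≤ s
  sign : ∀ i, x i ≠ 0 → 0 < e * (-1) ^ b i * x i
  exists_eq : ∀ a ≤ s, ∃ i, x i ≠ 0 ∧ b i = a

theorem monotone_cons {α : Type*} [Preorder α] {n : ℕ} {a : α} {f : Fin n → α}
    (ha : ∀ i, a ≤ f i) (hf : Monotone f) : Monotone (Fin.cons a f : Fin (n + 1) → α) :=
  monotone_iff_forall_lt.2 ((Fin.liftFun_cons (· ≤ ·)).2 ⟨ha, monotone_iff_forall_lt.1 hf⟩)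

namespace IsSignBlockMap

variable {n s : ℕ} {e : ℝ}

theorem cons_zero {x : Fin n → ℝ} {b : Fin n → ℕ} (h : IsSignBlockMap x e s b) :
    IsSignBlockMap (Fin.cons 0 x : Fin (n + 1) → ℝ) e s (Fin.cons 0 b) where
  monotone := monotone_cons (fun _ => Nat.zero_le _) h.monotone
  le := Fin.cases (Nat.zero_le s) h.le
  sign := Fin.cases (fun h0 => absurd rfl h0) h.sign
  exists_eq a ha := (h.exists_eq a ha).imp' Fin.succ fun _ hi => hi

theorem cons_of_pos {x : Fin n → ℝ} {b : Fin n → ℕ} (h : IsSignBlockMap x e s b) {a : ℝ} {t : ℕ}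
    (ht : t ≤ 1) (hae : 0 < a * (-1) ^ t * e) :
    IsSignBlockMap (Fin.cons a x : Fin (n + 1) → ℝ) a (t + s) (Fin.cons 0 fun i => t + b i) where
  monotone := monotone_cons (fun _ => Nat.zero_le _) (h.monotone.const_add t)
  le := Fin.cases (Nat.zero_le _) fun i => Nat.add_le_add_left (h.le i) t
  sign := by
    refine Fin.cases (fun ha => ?_) fun i hi => ?_
    · simpa using ha
    · have hsign := mul_pos_trans hae ((mul_assoc e _ _).symm ▸ h.sign i hi)
      simpa [pow_add, mul_assoc] using hsign
  exists_eq := by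
    rintro (_ | c) hc
    · exact ⟨0, left_ne_zero_of_mul (left_ne_zero_of_mul hae.ne'), rfl⟩
    · obtain ⟨i, hi, hbi⟩ := h.exists_eq (c + 1 - t) (by omega)
      exact ⟨i.succ, hi, by simp only [Fin.cons_succ]; omega⟩

theorem exists_orderEmb {ι : Type*} [LinearOrder ι] {x : ι → ℝ} {b : ι → ℕ}
    (h : IsSignBlockMap x e s b) : ∃ j : Fin (s + 1) ↪o ι, ∀ a, x (j a) ≠ 0 ∧ b (j a) = a := by
  choose j hxj hbj using fun a : Fin (s + 1) => h.exists_eq a (Nat.le_of_lt_succ a.2)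
  have hj : StrictMono j := fun a c hac => h.monotone.reflect_lt (by rwa [hbj, hbj])
  exact ⟨OrderEmbedding.ofStrictMono j hj, fun a => ⟨hxj a, hbj a⟩⟩

end IsSignBlockMap

variable {n : ℕ} {x y : Fin n → ℝ}

theorem exists_isSignBlockMap_of_filter_eq_cons {e : ℝ} {l : List ℝ}
    (h : (List.ofFn x).filter (· ≠ 0) = e :: l) :
    ∃ b, IsSignBlockMap x e (signChanges (e :: l)) b := by
  induction x using Fin.consInduction generalizing e l with
  | elim0 => simp at h
  | cons a x ih =>
    rw [List.ofFn_cons] at h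
    by_cases ha : a = 0
    · subst ha
      obtain ⟨b, hb⟩ := ih (by simpa using h)
      exact ⟨_, hb.cons_zero⟩
    rw [List.filter_cons_of_pos (by simpa using ha), List.cons.injEq] at h
    obtain ⟨rfl, hl⟩ := h
    cases l with
    | nil =>
      have hx : ∀ i, x i = 0 := by simpa [List.filter_eq_nil_iff, List.mem_ofFn] using hl
      refine ⟨0, monotone_const, fun _ => Nat.zero_le _, ?_, ?_⟩
      · exact Fin.cases (fun _ => by simpa using ha) fun i hi => absurd (hx i) hi
      · exact fun c hc => ⟨0, ha, (Nat.le_zero.1 hc).symm⟩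
    | cons e' l' =>
      obtain ⟨b, hb⟩ := ih hl
      have he' : e' ≠ 0 := by
        have hmem : e' ∈ (List.ofFn x).filter (· ≠ 0) := hl ▸ List.mem_cons_self
        simpa using (List.mem_filter.1 hmem).2
      refine ⟨_, hb.cons_of_pos (by split_ifs <;> simp) ?_⟩
      split_ifs with hneg
      · simpa using hneg
      · simpa using (not_lt.1 hneg).lt_of_ne' (mul_ne_zero ha he')

theorem exists_isSignBlockMap (hx : x ≠ 0) : ∃ e b, IsSignBlockMap x e (Sminus x) b := by
  have hne : (List.ofFn x).filter (· ≠ 0) ≠ [] := by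
    simpa [List.filter_eq_nil_iff, List.mem_ofFn, funext_iff] using hx
  obtain ⟨e, l, hl⟩ := List.exists_cons_of_ne_nil hne
  obtain ⟨b, hb⟩ := exists_isSignBlockMap_of_filter_eq_cons hl
  exact ⟨e, b, by rwa [Sminus, hl]⟩

theorem Sminus_zero : Sminus (0 : Fin n → ℝ) = 0 := by
  rw [Sminus, List.filter_eq_nil_iff.2 (by simp [List.mem_ofFn]), signChanges]

theorem Sminus_lt (hx : x ≠ 0) : Sminus x < n := by
  obtain ⟨e, b, hb⟩ := exists_isSignBlockMap hx
  obtain ⟨j, -⟩ := hb.exists_orderEmb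
  simpa using Fintype.card_le_of_embedding j.toEmbedding

theorem Sminus_eq_signChanges (hy : ∀ i, y i ≠ 0) : Sminus y = signChanges (List.ofFn y) := by
  rw [Sminus, List.filter_eq_self.2 (by simpa [List.mem_ofFn] using hy)]

theorem Sminus_mono (hxy : ∀ i, x i ≠ 0 → 0 < x i * y i) : Sminus x ≤ Sminus y := by
  rcases eq_or_ne x 0 with rfl | hx
  · simp [Sminus_zero]
  obtain ⟨e, b, hb⟩ := exists_isSignBlockMap hx
  obtain ⟨j, hj⟩ := hb.exists_orderEmb
  have hyj (a) : y (j a) ≠ 0 := right_ne_zero_of_mul (hxy _ (hj a).1).ne'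
  obtain ⟨e', b', hb'⟩ := exists_isSignBlockMap fun hy => hyj 0 (congrFun hy _)
  have hne (a : Fin (Sminus x)) : b' (j a.castSucc) ≠ b' (j a.succ) := fun hab => by
    have hx₀ := hb.sign _ (hj a.castSucc).1
    have hx₁ := hb.sign _ (hj a.succ).1
    rw [(hj _).2, Fin.val_castSucc] at hx₀
    rw [(hj _).2, Fin.val_succ, pow_succ, mul_neg_one, mul_neg, neg_mul] at hx₁
    have hy₀ := hb'.sign _ (hyj a.castSucc)
    have hy₁ := hb'.sign _ (hyj a.succ)
    rw [← hab] at hy₁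
    have hxy₀ := mul_pos_trans hx₀ (hxy _ (hj a.castSucc).1)
    have hyy := mul_pos_trans (mul_comm _ (y _) ▸ hy₀) hy₁
    have hyx := mul_pos_trans hyy (mul_comm (x _) _ ▸ hxy _ (hj a.succ).1)
    exact (neg_pos.1 hx₁).not_gt (mul_pos_trans hxy₀ hyx)
  have hmono : StrictMono (b' ∘ j) := Fin.strictMono_iff_lt_succ.2 fun a =>
    (hb'.monotone (j.monotone (Fin.castSucc_lt_succ).le)).lt_of_ne (hne a)
  have hcard := Fintype.card_le_of_injective
    (fun a => (⟨b' (j a), Nat.lt_succ_of_le (hb'.le _)⟩ : Fin (Sminus y + 1)))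
    fun a a' haa' => hmono.injective (Fin.mk.inj haa')
  simpa using hcard

theorem Splus_le {s : ℕ}
    (h : ∀ y : Fin n → ℝ, (∀ i, y i ≠ 0) → (∀ i, x i ≠ 0 → y i = x i) → Sminus y ≤ s) :
    Splus x ≤ s := by
  refine csSup_le' ?_
  rintro _ ⟨y, hy, hyx, rfl⟩
  exact Sminus_eq_signChanges hy ▸ h y hy hyx

theorem Sminus_le_Splus (x : Fin n → ℝ) : Sminus x ≤ Splus x := by
  have hbdd : BddAbove {m : ℕ | ∃ y : Fin n → ℝ, (∀ i, y i ≠ 0) ∧ (∀ i, x i ≠ 0 → y i = x i) ∧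
      signChanges (List.ofFn y) = m} := by
    refine ⟨n, ?_⟩
    rintro _ ⟨y, hy, -, rfl⟩
    rw [← Sminus_eq_signChanges hy]
    rcases eq_or_ne y 0 with rfl | hy0
    · exact Sminus_zero.trans_le (Nat.zero_le n)
    · exact (Sminus_lt hy0).le
  let y i := if x i = 0 then 1 else x i
  have hy : ∀ i, y i ≠ 0 := fun i => by grind
  have hyx : ∀ i, x i ≠ 0 → y i = x i := fun i hi => if_neg hi
  have hxy : Sminus x ≤ Sminus y := Sminus_mono fun i hi => by
    simpa only [hyx i hi] using mul_self_pos.2 hi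
  exact hxy.trans (le_csSup hbdd ⟨y, hy, hyx, (Sminus_eq_signChanges hy).symm⟩)

end SignBlocks

section Compound

variable {R : Type*} [CommRing R] {ι κ τ : Type*} {m : ℕ}

theorem det_mul_eq_sum_prod_mul_det [Fintype κ] (M : Matrix (Fin m) κ R)
    (N : Matrix κ (Fin m) R) :
    (M * N).det = ∑ f : Fin m → κ, (∏ i, M i (f i)) * (N.submatrix f id).det := by
  classical
  have hrows : M * N = fun i => ∑ j, M i j • N.row j := by
    ext i l
    simp [Matrix.mul_apply, Finset.sum_apply]
  calc (M * N).det = detRowAlternating fun i => ∑ j, M i j • N.row j := by rw [hrows]; rfl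
    _ = ∑ f : Fin m → κ, detRowAlternating fun i => M i (f i) • N.row (f i) :=
      MultilinearMap.map_sum _ _
    _ = _ := Finset.sum_congr rfl fun f _ => MultilinearMap.map_smul_univ _ _ _

theorem exists_orderEmb_comp_perm_eq [LinearOrder κ] {f : Fin m → κ} (hf : f.Injective) :
    ∃ (s : Fin m ↪o κ) (σ : Equiv.Perm (Fin m)), s ∘ σ = f := by
  have hmono : StrictMono (f ∘ Tuple.sort f) :=
    (Tuple.monotone_sort f).strictMono_of_injective (hf.comp (Tuple.sort f).injective)
  exact ⟨OrderEmbedding.ofStrictMono _ hmono, (Tuple.sort f)⁻¹, by ext i; simp⟩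

theorem orderEmb_comp_perm_injective [LinearOrder κ] :
    (fun x : (Fin m ↪o κ) × Equiv.Perm (Fin m) => x.1 ∘ x.2).Injective := by
  rintro ⟨s, σ⟩ ⟨t, τ⟩ (hst : s ∘ σ = t ∘ τ)
  obtain rfl : s = t := OrderEmbedding.range_inj.1 <| by
    rw [← σ.surjective.range_comp s, hst, τ.surjective.range_comp t]
  exact Prod.ext rfl (Equiv.ext fun i => s.injective (congrFun hst i))

theorem det_mul_cauchyBinet [Fintype κ] [LinearOrder κ] (M : Matrix (Fin m) κ R)
    (N : Matrix κ (Fin m) R) :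
    (M * N).det = ∑ s : Fin m ↪o κ, (M.submatrix id s).det * (N.submatrix s id).det := by
  calc (M * N).det = ∑ f : Fin m → κ, (∏ i, M i (f i)) * (N.submatrix f id).det :=
      det_mul_eq_sum_prod_mul_det M N
    _ = ∑ x : (Fin m ↪o κ) × Equiv.Perm (Fin m),
        (∏ i, M i (x.1 (x.2 i))) * (N.submatrix (x.1 ∘ x.2) id).det := by
      refine (Finset.sum_of_injOn _ orderEmb_comp_perm_injective.injOn (by simp) ?_
        fun _ _ => rfl).symm
      intro f _ hf
      have hninj : ¬ f.Injective := fun hinj => hf <| by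
        obtain ⟨s, σ, rfl⟩ := exists_orderEmb_comp_perm_eq hinj
        exact ⟨(s, σ), by simp, rfl⟩
      obtain ⟨i, j, hij, hne⟩ := Function.not_injective_iff.1 hninj
      rw [det_zero_of_row_eq hne (by ext; simp [hij]), mul_zero]
    _ = ∑ s : Fin m ↪o κ, (M.submatrix id s).det * (N.submatrix s id).det := by
      rw [Fintype.sum_prod_type]
      refine Finset.sum_congr rfl fun s _ => ?_
      rw [← det_transpose, det_apply', Finset.sum_mul]
      refine Finset.sum_congr rfl fun σ _ => ?_
      have hperm : (N.submatrix (s ∘ σ) id).det = σ.sign * (N.submatrix s id).det :=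
        det_permute σ (N.submatrix s id)
      rw [hperm]
      simp only [transpose_apply, submatrix_apply, id]
      ring

/-- The `m`-th compound matrix, whose entries are the minors of order `m`, indexed by increasing
tuples of rows and columns. -/
def compoundMatrix [Preorder ι] [Preorder κ] (m : ℕ) (M : Matrix ι κ R) :
    Matrix (Fin m ↪o ι) (Fin m ↪o κ) R :=
  of fun r s => (M.submatrix r s).det

theorem compoundMatrix_mul [Preorder ι] [Fintype κ] [LinearOrder κ] [Preorder τ] (M : Matrix ι κ R)
    (N : Matrix κ τ R) : compoundMatrix m (M * N) = compoundMatrix m M * compoundMatrix m N := by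
  ext r s
  exact det_mul_cauchyBinet (M.submatrix r id) (N.submatrix id s)

theorem compoundMatrix_transpose [Preorder ι] [Preorder κ] (M : Matrix ι κ R) :
    compoundMatrix m Mᵀ = (compoundMatrix m M)ᵀ := by
  ext r s
  exact det_transpose (M.submatrix s r)

theorem compoundMatrix_diagonal [LinearOrder ι] (d : ι → R) :
    compoundMatrix m (diagonal d) = diagonal fun s => ∏ i, d (s i) := by
  ext r s
  rcases eq_or_ne r s with rfl | hrs
  · rw [diagonal_apply_eq, compoundMatrix, of_apply, submatrix_diagonal _ _ r.injective,
      det_diagonal]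
    rfl
  · have hrange : ¬ Set.range r ⊆ Set.range s := fun hsub => hrs <| by
      refine OrderEmbedding.range_inj.1 (Set.eq_of_subset_of_ncard_le hsub ?_ (Set.toFinite _))
      simp only [← Set.image_univ, Set.ncard_image_of_injective _ (RelEmbedding.injective _)]
      exact le_rfl
    obtain ⟨_, ⟨i, rfl⟩, hi⟩ := Set.not_subset.1 hrange
    rw [diagonal_apply_ne _ hrs]
    exact det_eq_zero_of_row_eq_zero i fun j => diagonal_apply_ne _ fun h => hi ⟨j, h.symm⟩

theorem compoundMatrix_one [LinearOrder ι] : compoundMatrix m (1 : Matrix ι ι R) = 1 := by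
  rw [← diagonal_one, compoundMatrix_diagonal]
  simp only [Finset.prod_const_one, diagonal_one]

theorem alternating_minors_vecMul (U : Matrix (Fin (m + 1)) (Fin m) R) :
    (fun a : Fin (m + 1) => (-1) ^ (a : ℕ) * (U.submatrix a.succAbove id).det) ᵥ* U = 0 := by
  ext c
  -- `U` with its column `c` duplicated; the sum is the expansion along the new first column.
  have hdet : (U.submatrix id (Fin.cons c id : Fin (m + 1) → Fin m)).det = 0 :=
    det_zero_of_column_eq (Fin.succ_ne_zero c).symm fun a => by simp
  rw [det_succ_column_zero] at hdet
  rw [vecMul, dotProduct, Pi.zero_apply, ← hdet]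
  refine Finset.sum_congr rfl fun a _ => ?_
  simp only [submatrix_apply, Fin.cons_zero, submatrix_submatrix, id]
  exact mul_right_comm _ _ _

end Compound

section Variation

variable {ι : Type*} {m n : ℕ}

/-- Strict sign consistency: all maximal minors of a matrix with `m` columns are nonzero and have
the same sign, which is encoded by the positivity of their pairwise products. -/
def IsStrictlySignConsistent [Preorder ι] (U : Matrix ι (Fin m) ℝ) : Prop :=
  ∀ r r' : Fin m ↪o ι, 0 < (U.submatrix r id).det * (U.submatrix r' id).det

namespace IsStrictlySignConsistent

theorem submatrix {κ : Type*} [Preorder ι] [Preorder κ] {U : Matrix ι (Fin m) ℝ}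
    (hU : IsStrictlySignConsistent U) (j : κ ↪o ι) :
    IsStrictlySignConsistent (U.submatrix j id) :=
  fun r r' => hU (r.trans j) (r'.trans j)

theorem eq_zero_of_alternating_mulVec {U : Matrix (Fin (m + 1)) (Fin m) ℝ}
    (hU : IsStrictlySignConsistent U) {e : ℝ} (he : e ≠ 0) {g : Fin m → ℝ}
    (h : ∀ a : Fin (m + 1), 0 ≤ e * (-1) ^ (a : ℕ) * (U *ᵥ g) a) : g = 0 := by
  let D (a : Fin (m + 1)) : ℝ := (U.submatrix a.succAbove id).det
  have hD (a b) : 0 < D a * D b := hU a.succAboveOrderEmb b.succAboveOrderEmb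
  have hsum : ∑ a : Fin (m + 1), (-1) ^ (a : ℕ) * D a * (U *ᵥ g) a = 0 :=
    (dotProduct_mulVec _ U g).trans (by rw [alternating_minors_vecMul, zero_dotProduct])
  have hsum' : ∑ a : Fin (m + 1), D 0 * D a * (e * (-1) ^ (a : ℕ) * (U *ᵥ g) a) = 0 := by
    rw [← mul_zero (D 0 * e), ← hsum, Finset.mul_sum]
    exact Finset.sum_congr rfl fun a _ => by ring
  have hUg (a) : (U *ᵥ g) a = 0 := by
    have hterm := (Finset.sum_eq_zero_iff_of_nonneg
      fun a _ => mul_nonneg (hD 0 a).le (h a)).1 hsum' a (Finset.mem_univ a)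
    simpa [(hD 0 a).ne', he] using hterm
  exact eq_zero_of_mulVec_eq_zero (left_ne_zero_of_mul (hD 0 0).ne')
    (funext fun i => hUg (Fin.succAbove 0 i))

theorem Splus_mulVec_le {U : Matrix (Fin n) (Fin (m + 1)) ℝ} (hU : IsStrictlySignConsistent U)
    {g : Fin (m + 1) → ℝ} (hg : g ≠ 0) : Splus (U *ᵥ g) ≤ m := by
  refine Splus_le fun y hy hyU => ?_
  by_contra! hlt
  have hy0 : y ≠ 0 := by
    rintro rfl
    exact absurd hlt (by simp [Sminus_zero])
  obtain ⟨e, b, hb⟩ := exists_isSignBlockMap hy0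
  obtain ⟨j, hj⟩ := hb.exists_orderEmb
  let j' : Fin (m + 2) ↪o Fin n := (Fin.castLEOrderEmb (by omega)).trans j
  have he : e ≠ 0 := fun he => by simpa [he] using hb.sign _ (hy (j 0))
  refine hg ((hU.submatrix j').eq_zero_of_alternating_mulVec he fun a => ?_)
  change 0 ≤ e * (-1) ^ (a : ℕ) * (U *ᵥ g) (j' a)
  by_cases hz : (U *ᵥ g) (j' a) = 0
  · rw [hz, mul_zero]
  · have hsign := hb.sign _ (hy (j' a))
    have hba : b (j' a) = a := (hj _).2
    rw [hba, hyU _ hz] at hsign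
    exact hsign.le

theorem det_mul_ne_zero [Fintype ι] [LinearOrder ι] {U : Matrix ι (Fin m) ℝ}
    (hU : IsStrictlySignConsistent U) {W : Matrix (Fin m) ι ℝ} {b : ι → ℕ} (hb : Monotone b)
    (hW : ∀ a i, 0 ≤ W a i) (hWb : ∀ a i, W a i ≠ 0 → b i = a) (hex : ∀ a, ∃ i, W a i ≠ 0) :
    (W * U).det ≠ 0 := by
  /- In the expansion of the determinant, only increasing choices of one row index from each block
  contribute, and by sign consistency all their terms have the same sign. -/
  choose j hj using hex
  have hmono {f : Fin m → ι} (hf : ∀ a, W a (f a) ≠ 0) : StrictMono f := fun a c hac =>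
    hb.reflect_lt (by rwa [hWb a _ (hf a), hWb c _ (hf c)])
  have hterm {f : Fin m → ι} (hf : ∀ a, W a (f a) ≠ 0) :
      0 < (∏ a, W a (f a)) * ((U.submatrix f id).det * (U.submatrix j id).det) :=
    mul_pos (Finset.prod_pos fun a _ => (hW a _).lt_of_ne' (hf a))
      (hU (OrderEmbedding.ofStrictMono f (hmono hf)) (OrderEmbedding.ofStrictMono j (hmono hj)))
  refine left_ne_zero_of_mul (b := (U.submatrix j id).det) (ne_of_gt ?_)
  rw [det_mul_eq_sum_prod_mul_det, Finset.sum_mul]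
  simp only [mul_assoc]
  refine Finset.sum_pos' (fun f _ => ?_) ⟨j, Finset.mem_univ j, hterm hj⟩
  by_cases hf : ∀ a, W a (f a) ≠ 0
  · exact (hterm hf).le
  · push Not at hf
    obtain ⟨a, ha⟩ := hf
    rw [Finset.prod_eq_zero (Finset.mem_univ a) ha, zero_mul]

theorem vecMul_ne_zero [Fintype ι] [LinearOrder ι] {s : ℕ} {U : Matrix ι (Fin (s + 1)) ℝ}
    (hU : IsStrictlySignConsistent U) {x : ι → ℝ} {e : ℝ} {b : ι → ℕ}
    (h : IsSignBlockMap x e s b) : x ᵥ* U ≠ 0 := by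
  intro hxU
  -- The rows of `W` are the blocks of `x` up to sign, so `e • x` is their alternating sum.
  let W : Matrix (Fin (s + 1)) ι ℝ := of fun a i => if b i = a then e * (-1) ^ b i * x i else 0
  have hW (a i) : 0 ≤ W a i := by
    simp only [W, of_apply]
    split_ifs
    · rcases eq_or_ne (x i) 0 with hx | hx
      · rw [hx, mul_zero]
      · exact (h.sign i hx).le
    · exact le_rfl
  have hWb (a i) (hai : W a i ≠ 0) : b i = a := by
    by_contra hba
    exact hai (if_neg hba)
  have hex (a : Fin (s + 1)) : ∃ i, W a i ≠ 0 := by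
    obtain ⟨i, hi, hbi⟩ := h.exists_eq a (Nat.le_of_lt_succ a.2)
    exact ⟨i, (if_pos hbi).trans_ne (h.sign i hi).ne'⟩
  let ε (a : Fin (s + 1)) : ℝ := (-1) ^ (a : ℕ)
  have hεW : ε ᵥ* W = e • x := by
    ext i
    let a₀ : Fin (s + 1) := ⟨b i, Nat.lt_succ_of_le (h.le i)⟩
    have hsq : (-1 : ℝ) ^ b i * (-1) ^ b i = 1 := by rw [← mul_pow, neg_one_mul, neg_neg, one_pow]
    have hoff (a) (ha : a ≠ a₀) : ε a * W a i = 0 := by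
      rw [show W a i = 0 from if_neg fun hba => ha (Fin.ext hba.symm), mul_zero]
    calc (ε ᵥ* W) i = ∑ a, ε a * W a i := rfl
      _ = ε a₀ * W a₀ i := Fintype.sum_eq_single a₀ hoff
      _ = (-1) ^ b i * (e * (-1) ^ b i * x i) := congrArg (ε a₀ * ·) (if_pos rfl)
      _ = e * x i := by linear_combination e * x i * hsq
  refine hU.det_mul_ne_zero h.monotone hW hWb hex (exists_vecMul_eq_zero_iff.1 ⟨ε, ?_, ?_⟩)
  · exact fun hε => one_ne_zero (congrFun hε 0)
  · rw [← vecMul_vecMul, hεW, smul_vecMul, hxU, smul_zero]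

end IsStrictlySignConsistent

end Variation

section Perron

variable {ι : Type*} [Fintype ι]

theorem mul_nonneg_of_sum_abs_le_abs_sum {α : Type*} [CommRing α] [LinearOrder α]
    [IsStrictOrderedRing α] {f : ι → α} (h : ∑ i, |f i| ≤ |∑ i, f i|) (i j : ι) :
    0 ≤ f i * f j := by
  wlog hsum : 0 ≤ ∑ i, f i generalizing f
  · have hneg := this (f := -f) (by simpa using h) (by simpa using (not_le.1 hsum).le)
    simpa using hneg
  rw [abs_of_nonneg hsum, ← sub_nonpos, ← Finset.sum_sub_distrib] at h
  have hterm (i) (_ : i ∈ Finset.univ) : 0 ≤ |f i| - f i := sub_nonneg.2 (le_abs_self _)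
  have hnonneg (i) : 0 ≤ f i := by
    have habs := (Finset.sum_eq_zero_iff_of_nonneg hterm).1
      (h.antisymm (Finset.sum_nonneg hterm)) i (Finset.mem_univ i)
    exact sub_eq_zero.1 habs ▸ abs_nonneg (f i)
  exact mul_nonneg (hnonneg i) (hnonneg j)

variable {B : Matrix ι ι ℝ} {μ : ℝ} {x : ι → ℝ}

theorem abs_eigenvalue_mul_abs_le (hB : ∀ i j, 0 ≤ B i j) (hx : B *ᵥ x = μ • x) (i : ι) :
    |μ| * |x i| ≤ (B *ᵥ |x|) i := by
  calc |μ| * |x i| = |∑ j, B i j * x j| := by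
        rw [← abs_mul]
        exact congrArg abs (congrFun hx i).symm
    _ ≤ ∑ j, |B i j * x j| := Finset.abs_sum_le_sum_abs _ _
    _ = (B *ᵥ |x|) i := Finset.sum_congr rfl fun j _ => by
        rw [abs_mul, abs_of_nonneg (hB i j), Pi.abs_apply]

theorem mulVec_abs_apply_eq (hB : ∀ i j, 0 ≤ B i j)
    (hmax : ∀ y, y ⬝ᵥ B *ᵥ y ≤ |μ| * (y ⬝ᵥ y)) (hx : B *ᵥ x = μ • x) {i : ι} (hi : x i ≠ 0) :
    (B *ᵥ |x|) i = |μ| * |x i| := by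
  have hterm (i) (_ : i ∈ Finset.univ) : 0 ≤ |x i| * ((B *ᵥ |x|) i - |μ| * |x i|) :=
    mul_nonneg (abs_nonneg _) (sub_nonneg.2 (abs_eigenvalue_mul_abs_le hB hx i))
  have hsum : ∑ i, |x i| * ((B *ᵥ |x|) i - |μ| * |x i|) ≤ 0 := by
    calc ∑ i, |x i| * ((B *ᵥ |x|) i - |μ| * |x i|)
        = |x| ⬝ᵥ B *ᵥ |x| - |μ| * (|x| ⬝ᵥ |x|) := by
          simp only [dotProduct, Finset.mul_sum, ← Finset.sum_sub_distrib, Pi.abs_apply]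
          exact Finset.sum_congr rfl fun i _ => by ring
      _ ≤ 0 := sub_nonpos.2 (hmax |x|)
  have hzero := (Finset.sum_eq_zero_iff_of_nonneg hterm).1
    (hsum.antisymm (Finset.sum_nonneg hterm)) i (Finset.mem_univ i)
  exact sub_eq_zero.1 ((mul_eq_zero.1 hzero).resolve_left (abs_ne_zero.2 hi))

theorem eigenvector_mul_pos (hB : ∀ i j, 0 < B i j)
    (hmax : ∀ y, y ⬝ᵥ B *ᵥ y ≤ |μ| * (y ⬝ᵥ y)) (hx : B *ᵥ x = μ • x) (hx0 : x ≠ 0) (i j : ι) :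
    0 < x i * x j := by
  obtain ⟨l, hl⟩ := Function.ne_iff.1 hx0
  have hBx (i) : ∑ j, B i j * x j = μ * x i := congrFun hx i
  have hnonneg (i j) : 0 ≤ x i * x j := by
    have habs : ∑ j, |B l j * x j| ≤ |∑ j, B l j * x j| := by
      rw [hBx, abs_mul, ← mulVec_abs_apply_eq (fun i j => (hB i j).le) hmax hx hl]
      exact (Finset.sum_congr rfl fun j _ => by
        rw [abs_mul, abs_of_pos (hB l j), Pi.abs_apply]).le
    have hmul := mul_nonneg_of_sum_abs_le_abs_sum habs i j
    rw [mul_mul_mul_comm] at hmul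
    exact nonneg_of_mul_nonneg_right hmul (mul_pos (hB l i) (hB l j))
  have hpos (i) : 0 < μ * x i * x l := by
    rw [← hBx, Finset.sum_mul]
    simp only [mul_assoc]
    exact Finset.sum_pos' (fun j _ => mul_nonneg (hB i j).le (hnonneg j l))
      ⟨l, Finset.mem_univ l, mul_pos (hB i l) (mul_self_pos.2 hl)⟩
  have hne (i) : x i ≠ 0 := right_ne_zero_of_mul (left_ne_zero_of_mul (hpos i).ne')
  exact (hnonneg i j).lt_of_ne' (mul_ne_zero (hne i) (hne j))

end Perron

section Eigenbasis

variable {ι : Type*} [Fintype ι]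

theorem exists_perm_of_map_univ_eq {α : Type*} {f g : ι → α}
    (h : Finset.univ.val.map f = Finset.univ.val.map g) :
    ∃ σ : Equiv.Perm ι, ∀ i, g (σ i) = f i := by
  classical
  have hfiber (a : α) : Nonempty ({i // f i = a} ≃ {i // g i = a}) := by
    have hcount := congrArg (Multiset.count a) h
    rw [Multiset.count_map, Multiset.count_map] at hcount
    rw [← Fintype.card_eq, Fintype.card_subtype, Fintype.card_subtype]
    simp only [eq_comm (a := a)] at hcount
    exact hcount
  exact ⟨Equiv.ofFiberEquiv fun a => (hfiber a).some, Equiv.ofFiberEquiv_map _⟩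

variable [DecidableEq ι]

/-- The columns of `V` form an orthonormal basis of eigenvectors of `A`, the `i`-th of them for the
eigenvalue `d i`. -/
structure IsOrthonormalEigenbasis (A V : Matrix ι ι ℝ) (d : ι → ℝ) : Prop where
  orthogonal : Vᵀ * V = 1
  mul_eq : A * V = V * diagonal d

theorem exists_isOrthonormalEigenbasis_of_isSymm {A : Matrix ι ι ℝ} (hA : A.IsSymm) {d : ι → ℝ}
    (hd : A.charpoly = ∏ i, (X - C (d i))) : ∃ V, IsOrthonormalEigenbasis A V d := by
  have hH : A.IsHermitian := isHermitian_iff_isSymm.2 hA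
  have hroots : Finset.univ.val.map d = Finset.univ.val.map hH.eigenvalues := by
    rw [← roots_multiset_prod_X_sub_C (Finset.univ.val.map d), Multiset.map_map]
    exact (congrArg roots hd).symm.trans hH.roots_charpoly_eq_eigenvalues
  obtain ⟨σ, hσ⟩ := exists_perm_of_map_univ_eq hroots
  let U : Matrix ι ι ℝ := hH.eigenvectorUnitary
  have hU : Uᵀ * U = 1 := mem_unitaryGroup_iff'.1 hH.eigenvectorUnitary.2
  have hAU : A * U = U * diagonal hH.eigenvalues := by
    calc A * U = U * diagonal hH.eigenvalues * Uᵀ * U := by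
          congr 1
          exact hH.spectral_theorem
      _ = U * diagonal hH.eigenvalues := by rw [Matrix.mul_assoc, hU, Matrix.mul_one]
  have hd : diagonal d = (diagonal hH.eigenvalues).submatrix σ σ := by
    rw [submatrix_diagonal _ _ σ.injective]
    exact congrArg diagonal (funext fun i => (hσ i).symm)
  refine ⟨U.submatrix id σ, ?_, ?_⟩
  · rw [transpose_submatrix, ← submatrix_mul _ _ _ _ _ Function.bijective_id, hU,
      submatrix_one_equiv]
  · rw [hd, submatrix_mul_equiv, ← hAU]
    rfl

namespace IsOrthonormalEigenbasis

theorem compound {ι : Type*} [Fintype ι] [LinearOrder ι] {A V : Matrix ι ι ℝ} {d : ι → ℝ}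
    (h : IsOrthonormalEigenbasis A V d) (m : ℕ) :
    IsOrthonormalEigenbasis (compoundMatrix m A) (compoundMatrix m V)
      fun s => ∏ a, d (s a) where
  orthogonal := by
    rw [← compoundMatrix_transpose, ← compoundMatrix_mul, h.orthogonal, compoundMatrix_one]
  mul_eq := by
    rw [← compoundMatrix_diagonal, ← compoundMatrix_mul, ← compoundMatrix_mul, h.mul_eq]

variable {A V : Matrix ι ι ℝ} {d : ι → ℝ}

theorem mulVec_col (h : IsOrthonormalEigenbasis A V d) (i : ι) :
    A *ᵥ (V.col i) = d i • V.col i := by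
  funext j
  have hji := congrFun (congrFun h.mul_eq j) i
  rw [mul_diagonal, mul_comm] at hji
  exact hji

theorem mulVec_vecMul (h : IsOrthonormalEigenbasis A V d) (v : ι → ℝ) : V *ᵥ (v ᵥ* V) = v := by
  rw [← mulVec_transpose, mulVec_mulVec, mul_eq_one_comm.1 h.orthogonal, one_mulVec]

theorem eq_mul_diagonal_mul_transpose (h : IsOrthonormalEigenbasis A V d) :
    A = V * diagonal d * Vᵀ := by
  rw [← h.mul_eq, Matrix.mul_assoc, mul_eq_one_comm.1 h.orthogonal, Matrix.mul_one]

theorem vecMul_mulVec_apply (h : IsOrthonormalEigenbasis A V d) (v : ι → ℝ) (i : ι) :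
    ((A *ᵥ v) ᵥ* V) i = d i * (v ᵥ* V) i := by
  rw [← mulVec_transpose, ← mulVec_transpose, h.eq_mul_diagonal_mul_transpose, mulVec_mulVec,
    ← Matrix.mul_assoc, ← Matrix.mul_assoc, h.orthogonal, Matrix.one_mul, ← mulVec_mulVec,
    mulVec_diagonal]

theorem dotProduct_eq (h : IsOrthonormalEigenbasis A V d) (v w : ι → ℝ) :
    v ⬝ᵥ w = (v ᵥ* V) ⬝ᵥ (w ᵥ* V) := by
  rw [← dotProduct_mulVec, h.mulVec_vecMul]

theorem dotProduct_mulVec_le (h : IsOrthonormalEigenbasis A V d) {M : ℝ} (hM : ∀ i, |d i| ≤ M)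
    (v : ι → ℝ) : v ⬝ᵥ A *ᵥ v ≤ M * (v ⬝ᵥ v) := by
  rw [h.dotProduct_eq v (A *ᵥ v), h.dotProduct_eq v v]
  simp only [dotProduct, h.vecMul_mulVec_apply, Finset.mul_sum]
  refine Finset.sum_le_sum fun i _ => ?_
  rw [mul_left_comm]
  exact mul_le_mul_of_nonneg_right ((le_abs_self _).trans (hM i)) (mul_self_nonneg _)

theorem col_dotProduct_col (h : IsOrthonormalEigenbasis A V d) (i j : ι) :
    V.col i ⬝ᵥ V.col j = (1 : Matrix ι ι ℝ) i j :=
  congrFun (congrFun h.orthogonal i) j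

theorem col_ne_zero (h : IsOrthonormalEigenbasis A V d) (i : ι) : V.col i ≠ 0 := fun hi => by
  simpa [hi] using h.col_dotProduct_col i i

theorem mul_pos_of_forall_abs_le (h : IsOrthonormalEigenbasis A V d) (hA : ∀ i j, 0 < A i j)
    {a : ι} (ha : ∀ i, |d i| ≤ |d a|) (i j : ι) : 0 < V i a * V j a :=
  eigenvector_mul_pos hA (h.dotProduct_mulVec_le ha) (h.mulVec_col a) (h.col_ne_zero a) i j

theorem abs_lt_of_forall_abs_le (h : IsOrthonormalEigenbasis A V d) (hA : ∀ i j, 0 < A i j)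
    {a b : ι} (ha : ∀ i, |d i| ≤ |d a|) (hb : b ≠ a) : |d b| < |d a| := by
  refine (ha b).lt_of_ne fun hab => ?_
  -- Columns `a` and `b` would both have entries of one sign, and so could not be orthogonal.
  have hsum : ∑ i, V b b * V b a * (V i b * V i a) = 0 := by
    rw [← Finset.mul_sum]
    exact mul_eq_zero_of_right _ ((h.col_dotProduct_col b a).trans (one_apply_ne hb))
  refine (Finset.sum_pos (fun i _ => ?_) ⟨a, Finset.mem_univ a⟩).ne' hsum
  rw [mul_mul_mul_comm]
  exact mul_pos (h.mul_pos_of_forall_abs_le hA (fun i => hab ▸ ha i) b i)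
    (h.mul_pos_of_forall_abs_le hA ha b i)

theorem vecMul_apply_eq_zero (h : IsOrthonormalEigenbasis A V d) {v : ι → ℝ} {μ : ℝ}
    (hv : A *ᵥ v = μ • v) {i : ι} (hi : d i ≠ μ) : (v ᵥ* V) i = 0 := by
  have hcoord : μ * (v ᵥ* V) i = d i * (v ᵥ* V) i := by
    rw [← h.vecMul_mulVec_apply, hv, smul_vecMul, Pi.smul_apply, smul_eq_mul]
  by_contra hne
  exact hi (mul_right_cancel₀ hne hcoord).symm

theorem vecMul_apply_ne_zero (h : IsOrthonormalEigenbasis A V d) {v : ι → ℝ} (hv0 : v ≠ 0) {i : ι}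
    (hv : A *ᵥ v = d i • v) (hi : ∀ j ≠ i, d j ≠ d i) : (v ᵥ* V) i ≠ 0 := by
  intro hvi
  have hvV : v ᵥ* V = 0 := funext fun j => by
    rcases eq_or_ne j i with rfl | hj
    · exact hvi
    · exact h.vecMul_apply_eq_zero hv (hi j hj)
  exact hv0 (by rw [← h.mulVec_vecMul v, hvV, mulVec_zero])

theorem sum_smul_vecMul_apply (h : IsOrthonormalEigenbasis A V d) {s : Finset ι} {u : ι → ι → ℝ}
    (hu : ∀ i ∈ s, A *ᵥ u i = d i • u i) (hs : ∀ i ∈ s, ∀ j ≠ i, d j ≠ d i) (c : ι → ℝ) (j : ι) :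
    ((∑ i ∈ s, c i • u i) ᵥ* V) j = if j ∈ s then c j * (u j ᵥ* V) j else 0 := by
  rw [sum_vecMul, Finset.sum_apply, ← Finset.sum_ite_eq s j fun i => c i * (u i ᵥ* V) i]
  refine Finset.sum_congr rfl fun i hi => ?_
  rw [smul_vecMul, Pi.smul_apply, smul_eq_mul]
  split_ifs with hij
  · rw [hij]
  · rw [h.vecMul_apply_eq_zero (hu i hi) (hs i hi j hij), mul_zero]

end IsOrthonormalEigenbasis

end Eigenbasis

section StrictlyKPositive

variable {n k m : ℕ}

theorem strictMono_snoc {α : Type*} [Preorder α] {f : Fin n → α} {a : α} (hf : StrictMono f)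
    (ha : ∀ i, f i < a) : StrictMono (Fin.snoc f a : Fin (n + 1) → α) := by
  rw [← Fin.insertNth_last']
  exact (Fin.strictMono_insertNth_iff _ _ _).2
    ⟨hf, fun i _ => ha i, fun i hi => absurd hi i.castSucc_lt_last.not_ge⟩

theorem castLE_le_orderEmb (hmn : m ≤ n) (s : Fin m ↪o Fin n) (i : Fin m) :
    Fin.castLE hmn i ≤ s i := by
  obtain ⟨i, hi⟩ := i
  induction i with
  | zero => exact Nat.zero_le _
  | succ i ih =>
    have hlt : s ⟨i, by omega⟩ < s ⟨i + 1, hi⟩ := s.strictMono (Fin.mk_lt_mk.2 i.lt_succ_self)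
    exact Nat.succ_le_of_lt ((ih (by omega)).trans_lt hlt)

theorem abs_prod_orderEmb_le {d : Fin n → ℝ} (hd : Antitone fun i => |d i|) (hmn : m ≤ n)
    (s : Fin m ↪o Fin n) : |∏ a, d (s a)| ≤ |∏ a, d (Fin.castLEOrderEmb hmn a)| := by
  rw [Finset.abs_prod, Finset.abs_prod]
  exact Finset.prod_le_prod (fun _ _ => abs_nonneg _) fun a _ => hd (castLE_le_orderEmb hmn s a)

namespace IsStrictlyKPositive

variable {A V : Matrix (Fin n) (Fin n) ℝ} {d : Fin n → ℝ}

theorem compoundMatrix_pos (hA : IsStrictlyKPositive A k) (hm : 1 ≤ m) (hmk : m ≤ k)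
    (r s : Fin m ↪o Fin n) : 0 < compoundMatrix m A r s :=
  hA m hm hmk r s r.strictMono s.strictMono

theorem isStrictlySignConsistent_leadingColumns (hA : IsStrictlyKPositive A k)
    (hV : IsOrthonormalEigenbasis A V d) (hd : Antitone fun i => |d i|) (hmk : m ≤ k)
    (hmn : m ≤ n) : IsStrictlySignConsistent (V.submatrix id (Fin.castLE hmn)) := by
  intro r r'
  rcases m.eq_zero_or_pos with rfl | hm
  · simp only [det_isEmpty, mul_one, zero_lt_one]
  · exact (hV.compound m).mul_pos_of_forall_abs_le (hA.compoundMatrix_pos hm hmk)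
      (a := Fin.castLEOrderEmb hmn) (abs_prod_orderEmb_le hd hmn) r r'

theorem abs_eigenvalue_lt (hA : IsStrictlyKPositive A k) (hV : IsOrthonormalEigenbasis A V d)
    (hd : Antitone fun i => |d i|) {i j : Fin n} (hij : i < j) (hik : (i : ℕ) < k) :
    |d j| < |d i| := by
  /- The leading `(i + 1)`-tuple dominates in the compound of order `i + 1`; compare it with the
  tuple in which `j` replaces the last index `i`. -/
  let lead : Fin (i + 1) ↪o Fin n := Fin.castLEOrderEmb i.2
  let f : Fin i → Fin n := fun a => lead a.castSucc
  let t : Fin (i + 1) ↪o Fin n := OrderEmbedding.ofStrictMono (Fin.snoc f j) <|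
    strictMono_snoc (lead.strictMono.comp Fin.strictMono_castSucc) fun a =>
      (lead.strictMono a.castSucc_lt_last).trans hij
  have htlast : t (Fin.last i) = j := Fin.snoc_last (α := fun _ => Fin n) j f
  have htcast (a : Fin i) : t a.castSucc = lead a.castSucc :=
    Fin.snoc_castSucc (α := fun _ => Fin n) j f a
  have hne : t ≠ lead := fun h => hij.ne' (htlast.symm.trans (congrFun (congrArg _ h) (Fin.last i)))
  have hlt := (hV.compound (i + 1)).abs_lt_of_forall_abs_le
    (hA.compoundMatrix_pos (Nat.succ_pos _) hik) (abs_prod_orderEmb_le hd i.2) hne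
  simp only [Fin.prod_univ_castSucc, abs_mul, htlast, htcast] at hlt
  exact lt_of_mul_lt_mul_left hlt (abs_nonneg _)

theorem eigenvalue_ne (hA : IsStrictlyKPositive A k) (hV : IsOrthonormalEigenbasis A V d)
    (hd : Antitone fun i => |d i|) {i j : Fin n} (hik : (i : ℕ) < k) (hji : j ≠ i) :
    d j ≠ d i := by
  intro h
  rcases hji.lt_or_gt with hlt | hlt
  · exact (hA.abs_eigenvalue_lt hV hd hlt (lt_trans hlt hik)).ne (by rw [h])
  · exact (hA.abs_eigenvalue_lt hV hd hlt hik).ne (by rw [h])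

theorem le_Sminus (hA : IsStrictlyKPositive A k) (hV : IsOrthonormalEigenbasis A V d)
    (hd : Antitone fun i => |d i|) {p : ℕ} (hpk : p ≤ k) {x : Fin n → ℝ} (hx0 : x ≠ 0)
    (hx : ∀ i : Fin n, (i : ℕ) < p → (x ᵥ* V) i = 0) : p ≤ Sminus x := by
  by_contra! hlt
  obtain ⟨e, b, hb⟩ := exists_isSignBlockMap hx0
  refine (hA.isStrictlySignConsistent_leadingColumns hV hd (hlt.trans_le hpk)
    (Sminus_lt hx0)).vecMul_ne_zero hb (funext fun i => ?_)
  exact hx (Fin.castLE _ i) ((Nat.le_of_lt_succ i.2).trans_lt hlt)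

theorem Splus_le (hA : IsStrictlyKPositive A k) (hV : IsOrthonormalEigenbasis A V d)
    (hd : Antitone fun i => |d i|) {q : Fin n} (hqk : (q : ℕ) < k) {x : Fin n → ℝ} (hx0 : x ≠ 0)
    (hx : ∀ i, q < i → (x ᵥ* V) i = 0) : Splus x ≤ q := by
  let g : Fin (q + 1) → ℝ := fun i => (x ᵥ* V) (Fin.castLE q.2 i)
  have hxg : V.submatrix id (Fin.castLE q.2) *ᵥ g = x := by
    funext i
    rw [← congrFun (hV.mulVec_vecMul x) i]
    change ∑ j : Fin (q + 1), V i (Fin.castLE q.2 j) * g j = ∑ j, V i j * (x ᵥ* V) j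
    refine Finset.sum_of_injOn (Fin.castLE q.2) (Fin.castLE_injective q.2).injOn (by simp)
      (fun j _ hj => mul_eq_zero_of_right _ (hx j (not_le.1 fun hjq => hj ?_))) fun _ _ => rfl
    exact ⟨⟨j, Nat.lt_succ_of_le hjq⟩, by simp, rfl⟩
  have hg0 : g ≠ 0 := fun hg => hx0 (by rw [← hxg, hg, mulVec_zero])
  exact hxg ▸ (hA.isStrictlySignConsistent_leadingColumns hV hd hqk q.2).Splus_mulVec_le hg0

end IsStrictlyKPositive

end StrictlyKPositive

/-- For a symmetric strictly `k`-positive matrix with eigenvalues ordered by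
decreasing modulus and corresponding eigenvectors `u 0, …, u (k-1)` (zero-based),
any nontrivial linear combination `∑_{i=p}^{q} c i • u i` with `p ≤ q < k`
(zero-based) has between `p` and `q` sign changes:
`p ≤ S⁻(u) ≤ S⁺(u) ≤ q`. -/
theorem symm_strictly_kpositive_eigenvector_combination_sign_changes
    {n k : ℕ} (hk1 : 1 ≤ k) (hkn : k ≤ n)
    (A : Matrix (Fin n) (Fin n) ℝ) (hsymm : A.IsSymm)
    (hA : IsStrictlyKPositive A k)
    (lam : Fin n → ℝ)
    (hspec : A.charpoly = ∏ i, (X - C (lam i)))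
    (hord : ∀ i j : Fin n, i ≤ j → |lam j| ≤ |lam i|)
    (u : Fin n → Fin n → ℝ)
    (hu : ∀ i : Fin n, (i : ℕ) < k → u i ≠ 0 ∧ A.mulVec (u i) = lam i • u i)
    (p q : Fin n) (hpq : p ≤ q) (hq : (q : ℕ) < k)
    (c : Fin n → ℝ) (hc : ∃ i ∈ Finset.Icc p q, c i ≠ 0) :
    (p : ℕ) ≤ Sminus (∑ i ∈ Finset.Icc p q, c i • u i) ∧
    Sminus (∑ i ∈ Finset.Icc p q, c i • u i) ≤ Splus (∑ i ∈ Finset.Icc p q, c i • u i) ∧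
    Splus (∑ i ∈ Finset.Icc p q, c i • u i) ≤ (q : ℕ) := by
  obtain ⟨V, hV⟩ := exists_isOrthonormalEigenbasis_of_isSymm hsymm hspec
  have hlam : Antitone fun i => |lam i| := fun i j => hord i j
  have hlt (i) (hi : i ∈ Finset.Icc p q) : (i : ℕ) < k :=
    (Fin.le_def.1 (Finset.mem_Icc.1 hi).2).trans_lt hq
  have hne (i) (hi : i ∈ Finset.Icc p q) (j) (hj : j ≠ i) : lam j ≠ lam i :=
    hA.eigenvalue_ne hV hlam (hlt i hi) hj
  have hcoord := hV.sum_smul_vecMul_apply (fun i hi => (hu i (hlt i hi)).2) hne c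
  set x := ∑ i ∈ Finset.Icc p q, c i • u i
  have hx0 : x ≠ 0 := by
    obtain ⟨i, hi, hci⟩ := hc
    obtain ⟨hui, hAui⟩ := hu i (hlt i hi)
    intro hx
    have hzero := hcoord i
    rw [hx, zero_vecMul, Pi.zero_apply, if_pos hi] at hzero
    exact mul_ne_zero hci (hV.vecMul_apply_ne_zero hui hAui (hne i hi)) hzero.symm
  have houtside (i) (hi : i ∉ Finset.Icc p q) : (x ᵥ* V) i = 0 := (hcoord i).trans (if_neg hi)
  have hpk : (p : ℕ) ≤ k := (Fin.le_def.1 hpq).trans hq.le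
  exact ⟨hA.le_Sminus hV hlam hpk hx0 fun i hi => houtside i fun h =>
      (Finset.mem_Icc.1 h).1.not_gt hi,
    Sminus_le_Splus x,
    hA.Splus_le hV hlam hq hx0 fun i hi => houtside i fun h => (Finset.mem_Icc.1 h).2.not_gt hi⟩
end
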